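/- arXiv:1705.10132 — 11 statements merged into one kernel-verified Lean document; each statement's English description precedes it below -/
import Mathlib

section
/- Let n ≥ 0, let x_0, …, x_{2n+1} be distinct real numbers and let t_0, …, t_n be distinct real numbers with t_k ≠ x_ℓ for all k, ℓ. Then for all indices j, k ∈ {0, …, n} (including j = k), ∑_{ℓ=0}^{2n+1} ω_t(x_ℓ)^2 / ( ω_x′(x_ℓ) (x_ℓ − t_j)(x_ℓ − t_k) ) = 0. (Matrix form: C^T Δ C = 0, where C is the Cauchy matrix C_{ℓ,k} = 1/(x_ℓ − t_k) and Δ = diag(ω_t(x_ℓ)^2 / ω_x′(x_ℓ)); this is Lemma 4.3 of the paper.) -/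
open Finset

/-!
Cancelling `x_ℓ - t_j` and `x_ℓ - t_k` turns the summand into `P(x_ℓ) / ω_x′(x_ℓ)`, where
`P(z) = ∏_{i ≠ j} (z - t_i) · ∏_{i ≠ k} (z - t_i)` has degree `2n`. By Lagrange interpolation at the
`2n + 2` nodes `x_ℓ` (`Lagrange.coeff_eq_sum`), the sum is the coefficient of `z^(2n+1)` in `P`,
that is, the divided difference of order `2n + 1` of `P`, which vanishes.
-/

/-- For distinct reals `x_0, …, x_{2n+1}` and distinct reals `t_0, …, t_n`
disjoint from the `x_ℓ`, for all `j, k ∈ {0,…,n}`: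
`∑_ℓ ω_t(x_ℓ)^2 / (ω_x′(x_ℓ) (x_ℓ − t_j)(x_ℓ − t_k)) = 0` (matrix form `CᵀΔC = 0`, Lemma 4.3). -/
theorem cauchy_delta_cauchy_eq_zero
    (n : ℕ) (x : Fin (2 * n + 2) → ℝ) (hx : Function.Injective x)
    (t : Fin (n + 1) → ℝ) (ht : Function.Injective t)
    (hxt : ∀ k ℓ, t k ≠ x ℓ) (j k : Fin (n + 1)) :
    ∑ ℓ : Fin (2 * n + 2),
      (∏ i : Fin (n + 1), (x ℓ - t i)) ^ 2 /
        ((∏ m ∈ Finset.univ.erase ℓ, (x ℓ - x m)) * (x ℓ - t j) * (x ℓ - t k)) = 0 := by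
  set P : Polynomial ℝ :=
    Lagrange.nodal (univ.erase j) t * Lagrange.nodal (univ.erase k) t with hP
  have hdeg : P.natDegree = 2 * n := by
    rw [hP, Polynomial.natDegree_mul Lagrange.nodal_ne_zero Lagrange.nodal_ne_zero,
      Lagrange.natDegree_nodal, Lagrange.natDegree_nodal]
    simp [two_mul]
  have hP0 : P ≠ 0 := mul_ne_zero Lagrange.nodal_ne_zero Lagrange.nodal_ne_zero
  have hcard : P.degree < #(univ : Finset (Fin (2 * n + 2))) := by
    rw [Polynomial.degree_eq_natDegree hP0, hdeg, card_univ, Fintype.card_fin]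
    exact_mod_cast (by omega : 2 * n < 2 * n + 2)
  have hcoeff : P.coeff (2 * n + 1) = 0 :=
    Polynomial.coeff_eq_zero_of_natDegree_lt (by omega)
  have hsum := Lagrange.coeff_eq_sum (s := univ) (v := x) hx.injOn (P := P) hcard
  rw [card_univ, Fintype.card_fin, show 2 * n + 2 - 1 = 2 * n + 1 by omega, hcoeff] at hsum
  rw [hsum]
  refine sum_congr rfl fun ℓ _ => ?_
  have hj : x ℓ - t j ≠ 0 := sub_ne_zero.2 (hxt j ℓ).symm
  have hk : x ℓ - t k ≠ 0 := sub_ne_zero.2 (hxt k ℓ).symm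
  have hω : ∏ m ∈ univ.erase ℓ, (x ℓ - x m) ≠ 0 := prod_ne_zero_iff.2 fun m hm =>
    sub_ne_zero.2 (hx.ne (ne_of_mem_erase hm).symm)
  have ej := mul_prod_erase univ (fun i => x ℓ - t i) (mem_univ j)
  have ek := mul_prod_erase univ (fun i => x ℓ - t i) (mem_univ k)
  rw [hP, Polynomial.eval_mul, Lagrange.eval_nodal, Lagrange.eval_nodal, sq]
  nth_rewrite 1 [← ej]
  rw [← ek]
  field_simp
end

section
/- Let n ≥ 0, let x_0 < x_1 < … < x_{2n+1} be real numbers, and let Φ be a real (2n+2) × (n+1) matrix of full column rank (for example, Φ_{ℓ,k} = φ_k(x_ℓ) for a basis φ_0, …, φ_n of the polynomials of degree at most n). Let Ω = diag(1/ω_x′(x_0), …, 1/ω_x′(x_{2n+1})) and S = diag((−1)^{ℓ+1})_{ℓ=0}^{2n+1}. Then the (n+1) × (n+1) matrix Φ^T Ω S Φ is symmetric positive definite. (Lemma 3.1 of the paper; the key point is that Ω S = |Ω| since the signs of ω_x′(x_ℓ) alternate.) -/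
/-! For increasing nodes, `ω_x′(x_ℓ)` has exactly `2n + 1 - ℓ` negative factors (those with
`k > ℓ`), so its sign is `(-1)^(ℓ+1)` and `Ω S = |Ω|` is a diagonal matrix with positive entries
(`sign_mul_prod_pos`). Congruence by a matrix with trivial kernel preserves positive
definiteness. -/

open Finset

/-- The product `ω_x′(x_ℓ)` has the sign `(-1)^(ℓ+1)`, as its negative factors are those with
`k > ℓ`. -/
lemma sign_mul_prod_pos (n : ℕ) (x : Fin (2 * n + 2) → ℝ) (hx : StrictMono x)
    (l : Fin (2 * n + 2)) :
    0 < (-1 : ℝ) ^ (l.val + 1) * ∏ k ∈ Finset.univ.erase l, (x l - x k) := by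
  have hsplit : (Finset.univ.erase l) = Finset.Iio l ∪ Finset.Ioi l := by
    ext k
    simp [lt_or_lt_iff_ne]
  have hdisj : Disjoint (Finset.Iio l) (Finset.Ioi l) :=
    Finset.disjoint_left.2 fun k h1 h2 =>
      lt_asymm (Finset.mem_Iio.1 h1) (Finset.mem_Ioi.1 h2)
  have hneg : ∏ k ∈ Finset.Ioi l, (x l - x k)
      = (-1 : ℝ) ^ (2 * n + 2 - 1 - l.val) * ∏ k ∈ Finset.Ioi l, (x k - x l) := by
    rw [← Fin.card_Ioi, ← Finset.prod_const, ← Finset.prod_mul_distrib]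
    exact Finset.prod_congr rfl fun k _ => by ring
  have hsign : (-1 : ℝ) ^ (l.val + 1) * (-1 : ℝ) ^ (2 * n + 2 - 1 - l.val) = 1 := by
    rw [← pow_add]
    exact Even.neg_one_pow ⟨n + 1, by omega⟩
  have hlow : 0 < ∏ k ∈ Finset.Iio l, (x l - x k) :=
    Finset.prod_pos fun k hk => sub_pos.2 (hx (Finset.mem_Iio.1 hk))
  have hhigh : 0 < ∏ k ∈ Finset.Ioi l, (x k - x l) :=
    Finset.prod_pos fun k hk => sub_pos.2 (hx (Finset.mem_Ioi.1 hk))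
  rw [hsplit, Finset.prod_union hdisj, hneg, mul_left_comm, ← mul_assoc ((-1 : ℝ) ^ (l.val + 1)),
    hsign, one_mul]
  exact mul_pos hlow hhigh

/-- For `x_0 < … < x_{2n+1}` and a full-column-rank real `(2n+2) × (n+1)` matrix
`Φ`, with `Ω = diag(1/ω_x′(x_ℓ))` and `S = diag((−1)^{ℓ+1})`, the matrix `Φᵀ Ω S Φ` is
symmetric positive definite (Lemma 3.1). -/
theorem phi_omega_s_phi_posDef
    (n : ℕ) (x : Fin (2 * n + 2) → ℝ) (hx : StrictMono x)
    (Φ : Matrix (Fin (2 * n + 2)) (Fin (n + 1)) ℝ)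
    (hΦ : Function.Injective Φ.mulVec) :
    (Φ.transpose *
      Matrix.diagonal (fun ℓ : Fin (2 * n + 2) =>
        1 / ∏ k ∈ Finset.univ.erase ℓ, (x ℓ - x k)) *
      Matrix.diagonal (fun ℓ : Fin (2 * n + 2) => (-1 : ℝ) ^ (ℓ.val + 1)) *
      Φ).PosDef := by
  rw [Matrix.mul_assoc Φ.transpose, Matrix.diagonal_mul_diagonal,
    ← Matrix.conjTranspose_eq_transpose_of_trivial]
  refine Matrix.PosDef.conjTranspose_mul_mul_same (Matrix.posDef_diagonal_iff.2 fun l => ?_) hΦ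
  -- `s / w` and `s * w` have the same sign.
  rw [one_div_mul_eq_div, div_pos_iff, ← mul_pos_iff]
  exact sign_mul_prod_pos n x hx l
end

section
/- Let N ≥ 1, let x_0, …, x_N be distinct real numbers and y_0, …, y_N be distinct real numbers with y_j ≠ x_ℓ for all j, ℓ. Then for all j ≠ k in {0, …, N}, ∑_{ℓ=0}^{N} ω_y(x_ℓ) / ( (x_ℓ − y_j)(x_ℓ − y_k) ω_x′(x_ℓ) ) = 0. (This is the off-diagonal Gram computation in the proof of Theorem 4.4: the function ω_y(x)/((x − y_j)(x − y_k)) is a polynomial of degree N − 1, so its order-N divided difference vanishes.) -/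
/-!
Since `j ≠ k`, the quotient `P(z) = ω_y(z) / ((z - y_j) (z - y_k))` is the polynomial
`∏_{i ≠ j, k} (z - y_i)` of degree `N - 1`. The sum is the divided difference of `P` at the
`N + 1` nodes `x_0, …, x_N`, which by Lagrange interpolation (`Lagrange.coeff_eq_sum`) is the
coefficient of `z ^ N` in `P`, hence zero.
-/

open Finset

/-- For `N ≥ 1`, distinct `x_0,…,x_N`, distinct `y_0,…,y_N` with `y_j ≠ x_ℓ`,
and `j ≠ k`: `∑_ℓ ω_y(x_ℓ)/((x_ℓ − y_j)(x_ℓ − y_k) ω_x′(x_ℓ)) = 0`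
(off-diagonal Gram computation in the proof of Theorem 4.4). -/
theorem gram_offdiagonal_eq_zero
    (N : ℕ) (hN : 1 ≤ N) (x y : Fin (N + 1) → ℝ)
    (hx : Function.Injective x) (hy : Function.Injective y)
    (hxy : ∀ j ℓ, y j ≠ x ℓ) (j k : Fin (N + 1)) (hjk : j ≠ k) :
    ∑ ℓ : Fin (N + 1),
      (∏ i : Fin (N + 1), (x ℓ - y i)) /
        ((x ℓ - y j) * (x ℓ - y k) * ∏ m ∈ Finset.univ.erase ℓ, (x ℓ - x m)) = 0 := by
  set P : Polynomial ℝ :=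
    ∏ i ∈ (univ.erase j).erase k, (Polynomial.X - Polynomial.C (y i)) with hP
  have hk : k ∈ univ.erase j := by simp [hjk.symm]
  have hdeg : P.natDegree = N - 1 := by
    rw [hP, Polynomial.natDegree_finsetProd_X_sub_C_eq_card, card_erase_of_mem hk,
      card_erase_of_mem (mem_univ j)]
    simp
  have hlt : P.natDegree < N := by omega
  have hdeg' : P.degree < #(univ : Finset (Fin (N + 1))) := by
    rw [card_univ, Fintype.card_fin]
    exact Polynomial.degree_le_natDegree.trans_lt (by exact_mod_cast hlt.trans (Nat.lt_succ_self N))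
  have hsum := Lagrange.coeff_eq_sum (s := univ) (v := x) hx.injOn hdeg'
  rw [card_univ, Fintype.card_fin, Nat.add_sub_cancel,
    Polynomial.coeff_eq_zero_of_natDegree_lt hlt] at hsum
  rw [hsum]
  refine sum_congr rfl fun ℓ _ => ?_
  have hj0 : x ℓ - y j ≠ 0 := sub_ne_zero.2 (hxy j ℓ).symm
  have hk0 : x ℓ - y k ≠ 0 := sub_ne_zero.2 (hxy k ℓ).symm
  rw [← mul_prod_erase univ _ (mem_univ j), ← mul_prod_erase _ _ hk, ← mul_assoc,
    mul_div_mul_left _ _ (mul_ne_zero hj0 hk0), hP, Polynomial.eval_prod]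
  simp
end

section
/- Let N ≥ 0, let x_0, …, x_N be distinct real numbers and y_0, …, y_N be distinct real numbers with y_j ≠ x_ℓ for all j, ℓ. Then for every k ∈ {0, …, N}, ∑_{ℓ=0}^{N} ω_y(x_ℓ) / ( (x_ℓ − y_k)^2 ω_x′(x_ℓ) ) = − ω_y′(y_k) / ω_x(y_k), where ω_x(y_k) = ∏_{ℓ=0}^{N} (y_k − x_ℓ) and ω_y′(y_k) = ∏_{j≠k} (y_k − y_j). (This is the diagonal Gram computation in the proof of Theorem 4.4, obtained by writing ∏_{j≠k}(x − y_j) = q(x)(x − y_k) + ω_y′(y_k) and evaluating divided differences.) -/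
/-!
Dividing out `x_ℓ - y_k` turns the sum into `∑_ℓ p(x_ℓ) / ((x_ℓ - y_k) ω_x′(x_ℓ))`, where
`p = ∏_{j ≠ k} (X - y_j)`. Since `p` has degree `N`, it equals its Lagrange interpolant at the
`N + 1` nodes `x_ℓ`. The barycentric formula for this interpolant at `y_k`
(`Lagrange.eval_interpolate_not_at_node`) reads
`p(y_k) = ω_x(y_k) ∑_ℓ p(x_ℓ) / ((y_k - x_ℓ) ω_x′(x_ℓ))`, and `p(y_k) = ω_y′(y_k)`.
-/

open Finset

/-- For distinct `x_0,…,x_N`, distinct `y_0,…,y_N` with `y_j ≠ x_ℓ`, and any `k`: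
`∑_ℓ ω_y(x_ℓ)/((x_ℓ − y_k)² ω_x′(x_ℓ)) = −ω_y′(y_k)/ω_x(y_k)`
(diagonal Gram computation in the proof of Theorem 4.4). -/
theorem gram_diagonal_eq
    (N : ℕ) (x y : Fin (N + 1) → ℝ)
    (hx : Function.Injective x) (hy : Function.Injective y)
    (hxy : ∀ j ℓ, y j ≠ x ℓ) (k : Fin (N + 1)) :
    ∑ ℓ : Fin (N + 1),
      (∏ i : Fin (N + 1), (x ℓ - y i)) /
        ((x ℓ - y k) ^ 2 * ∏ m ∈ Finset.univ.erase ℓ, (x ℓ - x m)) =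
      -(∏ j ∈ Finset.univ.erase k, (y k - y j)) / ∏ ℓ : Fin (N + 1), (y k - x ℓ) := by
  -- `p = ω_y / (X - y_k)`, so that `p(y_k) = ω_y′(y_k)`.
  set p : Polynomial ℝ := Lagrange.nodal (Finset.univ.erase k) y with hp
  have hdeg : p.degree < (Finset.univ : Finset (Fin (N + 1))).card := by
    rw [hp, Lagrange.degree_nodal, Finset.card_erase_of_mem (Finset.mem_univ k),
      Finset.card_univ, Fintype.card_fin]
    exact_mod_cast Nat.lt_succ_self N
  have hbary : p.eval (y k) = (∏ ℓ : Fin (N + 1), (y k - x ℓ)) *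
      ∑ ℓ : Fin (N + 1), Lagrange.nodalWeight Finset.univ x ℓ *
        (y k - x ℓ)⁻¹ * p.eval (x ℓ) := by
    conv_lhs => rw [Lagrange.eq_interpolate hx.injOn hdeg]
    rw [Lagrange.eval_interpolate_not_at_node _ fun ℓ _ => hxy k ℓ, Lagrange.eval_nodal]
  have hωx : ∏ ℓ : Fin (N + 1), (y k - x ℓ) ≠ 0 :=
    Finset.prod_ne_zero_iff.mpr fun ℓ _ => sub_ne_zero.mpr (hxy k ℓ)
  rw [← Lagrange.eval_nodal, ← hp, hbary, neg_div, mul_div_cancel_left₀ _ hωx,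
    ← Finset.sum_neg_distrib]
  refine Finset.sum_congr rfl fun ℓ _ => ?_
  have h : x ℓ - y k ≠ 0 := sub_ne_zero.mpr (hxy k ℓ).symm
  rw [← Finset.mul_prod_erase Finset.univ (fun i => x ℓ - y i) (Finset.mem_univ k),
    hp, Lagrange.eval_nodal, Lagrange.nodalWeight, Finset.prod_inv_distrib,
    ← neg_sub (x ℓ) (y k), inv_neg, sq, mul_assoc, mul_div_mul_left _ _ h, div_eq_mul_inv,
    mul_inv]
  ring
end

section
/- Let n ≥ 0 and let x_0 < x_1 < … < x_{2n+1} be real numbers and y_0, …, y_{2n+1} be real numbers satisfying the interlacing conditions y_j ∈ (x_j, x_{j+1}) for j = 0, …, 2n and y_{2n+1} > x_{2n+1}. Define the (2n+2) × (2n+2) real matrix M by M_{j,k} = √( |ω_y(x_j)/ω_x′(x_j)| · |ω_x(y_k)/ω_y′(y_k)| ) / (x_j − y_k). Then M is an orthogonal matrix, i.e. M^T M = I. (This is the key orthogonality fact D_1 C_{x,y} D_2 ∈ O(2n+2) in the proof of Theorem 4.4.) -/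
/-!
The `(k, l)` entry of `MᵀM` is `√|b k| √|b l| ∑ⱼ |a j| / ((x j - y k) (x j - y l))`, where
`a j = ω_y(x j) / ω_x'(x j)` and `b k = ω_x(y k) / ω_y'(y k)`. Interlacing forces `a j < 0` and
`0 < b k`: after pairing the factors of numerator and denominator by index, only the unpaired
factor `x j - y j` (resp. `y k - x k`) contributes a sign.

The polynomial `Q_l = ω_y / (z - y l)` has degree one less than the number of nodes `x j`, so it
equals its Lagrange interpolant. Evaluating the barycentric form of that interpolant at `y k` gives
`∑ⱼ a j / ((x j - y k) (x j - y l)) = - Q_l(y k) / ω_x(y k)`, which is `0` for `k ≠ l` and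
`- 1 / b k` for `k = l`.
-/

open Finset

/-- Barycentric evaluation at `y k` of the Lagrange interpolant, on the nodes `x j`, of
`∏ i ≠ l, (z - y i)`, with both sides divided by `-∏ i, (y k - x i)`. -/
lemma sum_cauchy_eq {N : ℕ} (x y : Fin N → ℝ) (hx : Function.Injective x)
    (hxy : ∀ j k, x j ≠ y k) (k l : Fin N) :
    ∑ j, (∏ i, (x j - y i)) / (∏ i ∈ univ.erase j, (x j - x i)) /
        ((x j - y k) * (x j - y l)) =
      -((∏ i ∈ univ.erase l, (y k - y i)) / ∏ i, (y k - x i)) := by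
  have hω : ∏ i, (y k - x i) ≠ 0 :=
    prod_ne_zero_iff.2 fun i _ => sub_ne_zero.2 (hxy i k).symm
  have hdeg : (Lagrange.nodal (univ.erase l) y).degree < ((univ : Finset (Fin N)).card : ℕ) := by
    rw [Lagrange.degree_nodal]
    exact_mod_cast card_erase_lt_of_mem (mem_univ l)
  have key := congrArg (Polynomial.eval (y k))
    (Lagrange.eq_interpolate (s := univ) (v := x) hx.injOn hdeg)
  rw [Lagrange.eval_interpolate_not_at_node _ fun i _ => (hxy i k).symm] at key
  simp only [Lagrange.eval_nodal, Lagrange.nodalWeight, prod_inv_distrib] at key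
  rw [key, mul_div_cancel_left₀ _ hω, ← sum_neg_distrib]
  refine sum_congr rfl fun j _ => ?_
  have e1 : x j - y k ≠ 0 := sub_ne_zero.2 (hxy j k)
  have e2 : x j - y l ≠ 0 := sub_ne_zero.2 (hxy j l)
  rw [← mul_prod_erase univ (fun i => x j - y i) (mem_univ l), ← neg_sub (x j) (y k), inv_neg]
  field_simp

/-- Pairing factors by index: if the factors of two products agree in sign away from `j`, the
quotient with the `j`-th factor missing below has the sign of the `j`-th factor above. -/
lemma prod_div_prod_erase {N : ℕ} (f g : Fin N → ℝ) (j : Fin N)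
    (h : ∀ i, i ≠ j → 0 < f i / g i) :
    ∃ c : ℝ, 0 < c ∧ (∏ i, f i) / (∏ i ∈ univ.erase j, g i) = f j * c := by
  refine ⟨∏ i ∈ univ.erase j, f i / g i, prod_pos fun i hi => h i (ne_of_mem_erase hi), ?_⟩
  rw [← mul_prod_erase univ f (mem_univ j), prod_div_distrib, mul_div_assoc]

/-- For `x_0 < … < x_{2n+1}` and interlacing points `y_j ∈ (x_j, x_{j+1})`
(for `j = 0,…,2n`) with `y_{2n+1} > x_{2n+1}`, the matrix
`M_{j,k} = √(|ω_y(x_j)/ω_x′(x_j)| · |ω_x(y_k)/ω_y′(y_k)|)/(x_j − y_k)` is orthogonal,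
i.e. `MᵀM = I` (key orthogonality fact in the proof of Theorem 4.4). -/
theorem scaled_cauchy_orthogonal
    (n : ℕ) (x y : Fin (2 * n + 2) → ℝ) (hx : StrictMono x)
    (h1 : ∀ j : Fin (2 * n + 2), x j < y j)
    (h2 : ∀ j : Fin (2 * n + 1), y j.castSucc < x j.succ)
    (M : Matrix (Fin (2 * n + 2)) (Fin (2 * n + 2)) ℝ)
    (hM : ∀ j k, M j k =
      Real.sqrt
        (|(∏ i : Fin (2 * n + 2), (x j - y i)) /
            (∏ i ∈ Finset.univ.erase j, (x j - x i))| *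
         |(∏ ℓ : Fin (2 * n + 2), (y k - x ℓ)) /
            (∏ i ∈ Finset.univ.erase k, (y k - y i))|) / (x j - y k)) :
    M.transpose * M = 1 := by
  have hyx : ∀ i j, i < j → y i < x j := by
    intro i j hij
    obtain ⟨i, rfl⟩ := Fin.exists_castSucc_eq.2 (Fin.ne_last_of_lt hij)
    exact (h2 i).trans_le (hx.monotone (Fin.castSucc_lt_iff_succ_le.1 hij))
  have hxy : ∀ i j, i ≤ j → x i < y j := fun i j hij => (hx.monotone hij).trans_lt (h1 j)
  have hy : StrictMono y := fun i j hij => (hyx i j hij).trans (h1 j)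
  have hne : ∀ j k, x j ≠ y k := fun j k =>
    (le_or_gt j k).elim (fun h => (hxy j k h).ne) fun h => (hyx k j h).ne'
  have ha : ∀ j, (∏ i, (x j - y i)) / (∏ i ∈ univ.erase j, (x j - x i)) < 0 := by
    intro j
    obtain ⟨c, hc, e⟩ := prod_div_prod_erase (fun i => x j - y i) (fun i => x j - x i) j
      fun i hi => by
        rcases lt_or_gt_of_ne hi with h | h
        · exact div_pos (sub_pos.2 (hyx i j h)) (sub_pos.2 (hx h))
        · exact div_pos_of_neg_of_neg (sub_neg.2 (hxy j i h.le)) (sub_neg.2 (hx h))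
    rw [e]
    exact mul_neg_of_neg_of_pos (sub_neg.2 (h1 j)) hc
  have hb : ∀ k, 0 < (∏ i, (y k - x i)) / (∏ i ∈ univ.erase k, (y k - y i)) := by
    intro k
    obtain ⟨c, hc, e⟩ := prod_div_prod_erase (fun i => y k - x i) (fun i => y k - y i) k
      fun i hi => by
        rcases lt_or_gt_of_ne hi with h | h
        · exact div_pos (sub_pos.2 (hxy i k h.le)) (sub_pos.2 (hy h))
        · exact div_pos_of_neg_of_neg (sub_neg.2 (hyx k i h)) (sub_neg.2 (hy h))
    rw [e]
    exact mul_pos (sub_pos.2 (h1 k)) hc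
  have hsum := sum_cauchy_eq x y hx.injective hne
  ext k l
  have hentry : (M.transpose * M) k l =
      -(√((∏ i, (y k - x i)) / (∏ i ∈ univ.erase k, (y k - y i))) *
        √((∏ i, (y l - x i)) / (∏ i ∈ univ.erase l, (y l - y i)))) *
      ∑ j, (∏ i, (x j - y i)) / (∏ i ∈ univ.erase j, (x j - x i)) /
        ((x j - y k) * (x j - y l)) := by
    rw [Matrix.mul_apply, mul_sum]
    refine sum_congr rfl fun j _ => ?_
    rw [Matrix.transpose_apply, hM, hM, abs_of_neg (ha j), abs_of_pos (hb k), abs_of_pos (hb l),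
      Real.sqrt_mul (neg_pos.2 (ha j)).le, Real.sqrt_mul (neg_pos.2 (ha j)).le,
      div_mul_div_comm, mul_mul_mul_comm, Real.mul_self_sqrt (neg_pos.2 (ha j)).le]
    ring
  rw [hentry, hsum]
  by_cases hkl : k = l
  · subst hkl
    rw [Matrix.one_apply_eq, Real.mul_self_sqrt (hb k).le, neg_mul_neg, ← inv_div (∏ i, (y k - x i)),
      mul_inv_cancel₀ (hb k).ne']
  · rw [Matrix.one_apply_ne hkl,
      prod_eq_zero (f := fun i => y k - y i) (mem_erase.2 ⟨hkl, mem_univ k⟩) (sub_self (y k))]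
    simp
end

section
/- Let n ≥ 0, let x_0 < x_1 < … < x_{2n+1} be real numbers, let t_k ∈ (x_{2k}, x_{2k+1}) for k = 0, …, n, and let s_k ∈ (x_{2k+1}, x_{2k+2}) for k = 0, …, n−1 with s_n > x_{2n+1}. Define ω_t(z) = ∏_{k=0}^n (z − t_k), ω_s(z) = ∏_{k=0}^n (z − s_k), and the (2n+2) × (n+1) matrix A by A_{ℓ,k} = ( |ω_t(x_ℓ)| / √|ω_x′(x_ℓ)| ) · 1/(x_ℓ − t_k) (i.e. A = |Δ|^{1/2} C with Δ = diag(ω_t(x_ℓ)^2/ω_x′(x_ℓ)) and C the Cauchy matrix). Then there exists a diagonal (n+1) × (n+1) matrix Γ with strictly positive diagonal entries such that for all vectors u, v ∈ ℝ^{n+1} with ‖u‖_2 = ‖v‖_2 = 1, one has ‖AΓv‖_2 ≤ B · ‖AΓu‖_2, where B = ( max_ℓ √|ω_s(x_ℓ)/ω_t(x_ℓ)| ) · ( max_k √|ω_t(x_k)/ω_s(x_k)| ), both maxima being over ℓ, k ∈ {0, …, 2n+1}. (This is Theorem 4.4 of the paper: the optimally column-scaled 2-norm condition number of |Δ|^{1/2}C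 is at most B.) -/
/-!
Write `ω_x′(x_ℓ) = ∏_{m ≠ ℓ} (x_ℓ - x_m)` and `d_ℓ = -ω_t(x_ℓ) ω_s(x_ℓ) / ω_x′(x_ℓ)`.

* Interlacing makes every `d_ℓ` positive (`neg_weight_pos`): between two consecutive nodes there is
  exactly one zero of `ω_t ω_s`, so this product changes sign exactly when `ω_x′` does.
* The columns of the Cauchy matrix `1 / (x_ℓ - t_k)` are orthogonal for the weights `d_ℓ`
  (`cauchy_orthogonal`): for `j ≠ k` the weighted inner product is, up to sign, the divided
  difference over `2n + 2` nodes of the polynomial `ω_t ω_s / ((X - t_j) (X - t_k))`, whose degree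
  is only `2n`.

Choosing `γ_k` so as to normalise these columns, `∑ d_ℓ g_ℓ(w)² = ‖w‖²` for
`g_ℓ(w) = ∑ γ_k w_k / (x_ℓ - t_k)`, whereas `(AΓw)_ℓ² = |ω_t(x_ℓ) / ω_s(x_ℓ)| d_ℓ g_ℓ(w)²`.
Hence `AΓ` is an isometry followed by a diagonal scaling with entries `√|ω_t(x_ℓ) / ω_s(x_ℓ)|`,
and the condition number of that scaling is the asserted bound.
-/

open Finset

lemma prod_range_two_mul_eq (f : ℕ → ℝ) (n : ℕ) :
    ∏ j ∈ range (2 * n), f j = (∏ k ∈ range n, f (2 * k)) * ∏ k ∈ range n, f (2 * k + 1) := by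
  induction n with
  | zero => simp
  | succ n ih =>
    rw [show 2 * (n + 1) = 2 * n + 1 + 1 by ring, prod_range_succ, prod_range_succ, ih,
      prod_range_succ, prod_range_succ]
    ring

/-- If `x_0 < y_0 < x_1 < y_1 < ⋯`, then `∏ (x_ℓ - y_m)` and `∏_{m ≠ ℓ} (x_ℓ - x_m)` have opposite
signs: the factors agree in sign for each `m ≠ ℓ`, and the unpaired factor `x_ℓ - y_ℓ` is
negative. -/
lemma interlacing_quotient_neg {N : ℕ} (x y : Fin N → ℝ) (h1 : ∀ i, x i < y i)
    (h2 : ∀ i j, i < j → y i < x j) (l : Fin N) :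
    (∏ m, (x l - y m)) / ∏ m ∈ univ.erase l, (x l - x m) < 0 := by
  rw [← mul_prod_erase univ _ (mem_univ l), mul_div_assoc, ← prod_div_distrib]
  refine mul_neg_of_neg_of_pos (sub_neg.2 (h1 l)) (prod_pos fun m hm => ?_)
  rcases lt_or_gt_of_ne (ne_of_mem_erase hm) with h | h
  · have := h1 m
    have := h2 m l h
    exact div_pos (by linarith) (by linarith)
  · have := h1 m
    have := h1 l
    have := h2 l m h
    exact div_pos_of_neg_of_neg (by linarith) (by linarith)

/-- Positivity of the weights `d_ℓ`. The interlacing is phrased through the values of the indices, so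
that `hs1` also covers `x_{2n+1} < s_n`, while `hs2` is vacuous for `k = n`. -/
lemma neg_weight_pos
    (n : ℕ) (x : Fin (2 * n + 2) → ℝ) (hx : StrictMono x)
    (t s : Fin (n + 1) → ℝ)
    (ht1 : ∀ (k : Fin (n + 1)) (i : Fin (2 * n + 2)), (i : ℕ) = 2 * k → x i < t k)
    (ht2 : ∀ (k : Fin (n + 1)) (i : Fin (2 * n + 2)), (i : ℕ) = 2 * k + 1 → t k < x i)
    (hs1 : ∀ (k : Fin (n + 1)) (i : Fin (2 * n + 2)), (i : ℕ) = 2 * k + 1 → x i < s k)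
    (hs2 : ∀ (k : Fin (n + 1)) (i : Fin (2 * n + 2)), (i : ℕ) = 2 * k + 2 → s k < x i)
    (l : Fin (2 * n + 2)) :
    0 < -((∏ i, (x l - t i)) * (∏ i, (x l - s i)) / ∏ m ∈ univ.erase l, (x l - x m)) := by
  -- `y` lists the zeros of `ω_t` and `ω_s` in increasing order: `t_0, s_0, t_1, s_1, …`
  let y : ℕ → ℝ := fun j =>
    if h : j / 2 < n + 1 then (if j % 2 = 0 then t ⟨j / 2, h⟩ else s ⟨j / 2, h⟩) else 0
  have yt : ∀ k : Fin (n + 1), y (2 * k) = t k := by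
    intro k
    have e : 2 * (k : ℕ) / 2 = k := by omega
    simp [y, e]
    omega
  have ys : ∀ k : Fin (n + 1), y (2 * k + 1) = s k := by
    intro k
    have e : (2 * (k : ℕ) + 1) / 2 = k := by omega
    have e' : (2 * (k : ℕ) + 1) % 2 = 1 := by omega
    simp [y, e, e']
    omega
  have hparity : ∀ i : Fin (2 * n + 2), ∃ k : Fin (n + 1), (i : ℕ) = 2 * k ∨ (i : ℕ) = 2 * k + 1 :=
    fun i => ⟨⟨i / 2, by omega⟩, by simp only; omega⟩
  have key := interlacing_quotient_neg x (fun i => y i) ?_ ?_ l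
  · have hprod : ∏ m : Fin (2 * n + 2), (x l - y m)
        = (∏ i, (x l - t i)) * ∏ i, (x l - s i) := by
      rw [Fin.prod_univ_eq_prod_range (fun j => x l - y j),
        show 2 * n + 2 = 2 * (n + 1) by ring, prod_range_two_mul_eq,
        ← Fin.prod_univ_eq_prod_range (fun k => x l - y (2 * k)),
        ← Fin.prod_univ_eq_prod_range (fun k => x l - y (2 * k + 1))]
      simp_rw [yt, ys]
    rw [hprod] at key
    linarith
  · intro i
    obtain ⟨k, hk | hk⟩ := hparity i
    · simpa only [hk, yt] using ht1 k i hk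
    · simpa only [hk, ys] using hs1 k i hk
  · intro i j hij
    have hij' : (i : ℕ) < j := hij
    obtain ⟨k, hk | hk⟩ := hparity i
    · simp only [hk, yt]
      refine (ht2 k ⟨2 * k + 1, by omega⟩ rfl).trans_le (hx.monotone ?_)
      rw [Fin.le_def]; simp only; omega
    · simp only [hk, ys]
      refine (hs2 k ⟨2 * k + 2, by omega⟩ rfl).trans_le (hx.monotone ?_)
      rw [Fin.le_def]; simp only; omega

lemma cauchy_orthogonal (n : ℕ) (x : Fin (2 * n + 2) → ℝ) (hx : Function.Injective x)
    (t s : Fin (n + 1) → ℝ) (hxt : ∀ l k, x l - t k ≠ 0) {j k : Fin (n + 1)} (hjk : j ≠ k) :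
    ∑ l, (∏ i, (x l - t i)) * (∏ i, (x l - s i)) / (∏ m ∈ univ.erase l, (x l - x m)) *
      (1 / (x l - t j) * (1 / (x l - t k))) = 0 := by
  classical
  let P : Polynomial ℝ := (∏ i ∈ (univ.erase j).erase k, (Polynomial.X - Polynomial.C (t i))) *
    ∏ i, (Polynomial.X - Polynomial.C (s i))
  have hkm : k ∈ univ.erase j := mem_erase.2 ⟨hjk.symm, mem_univ _⟩
  have hcard : #((univ.erase j).erase k) + 2 = n + 1 := by
    have h1 := card_erase_add_one hkm
    have h2 := card_erase_add_one (mem_univ j)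
    rw [card_univ, Fintype.card_fin] at h2
    omega
  have hdeg : P.natDegree < 2 * n + 1 := by
    refine Polynomial.natDegree_mul_le.trans_lt ?_
    rw [Polynomial.natDegree_finsetProd_X_sub_C_eq_card,
      Polynomial.natDegree_finsetProd_X_sub_C_eq_card, card_univ, Fintype.card_fin]
    omega
  have hN : #(univ : Finset (Fin (2 * n + 2))) = 2 * n + 2 := by simp
  have hsum := Lagrange.coeff_eq_sum (s := univ) (v := x) hx.injOn (P := P) (by
    rw [hN]
    exact Polynomial.degree_le_natDegree.trans_lt (by exact_mod_cast hdeg.trans (by omega)))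
  rw [hN, Polynomial.coeff_eq_zero_of_natDegree_lt (by omega)] at hsum
  rw [hsum]
  refine sum_congr rfl fun l _ => ?_
  have hP : P.eval (x l) = (∏ i ∈ (univ.erase j).erase k, (x l - t i)) * ∏ i, (x l - s i) := by
    simp [P, Polynomial.eval_prod]
  rw [hP, ← mul_prod_erase univ _ (mem_univ j), ← mul_prod_erase _ _ hkm]
  have := hxt l j
  have := hxt l k
  field_simp

/-- Pythagoras for columns `c · k` that are orthogonal with respect to the weights `d`. -/
lemma sum_weight_mul_sq {ι κ : Type*} [Fintype ι] [Fintype κ] (d : ι → ℝ) (c : ι → κ → ℝ)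
    (horth : ∀ j k, j ≠ k → ∑ l, d l * (c l j * c l k) = 0) (w : κ → ℝ) :
    ∑ l, d l * (∑ k, c l k * w k) ^ 2 = ∑ k, (∑ l, d l * c l k ^ 2) * w k ^ 2 := by
  have h1 : ∀ l, d l * (∑ k, c l k * w k) ^ 2
      = ∑ j, ∑ k, w j * w k * (d l * (c l j * c l k)) := by
    intro l
    rw [sq, sum_mul_sum, mul_sum]
    refine sum_congr rfl fun j _ => ?_
    rw [mul_sum]
    exact sum_congr rfl fun k _ => by ring
  simp_rw [h1]
  rw [sum_comm]
  refine sum_congr rfl fun j _ => ?_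
  rw [sum_comm]
  simp_rw [← mul_sum]
  rw [sum_eq_single j (fun k _ hk => by rw [horth j k hk.symm, mul_zero]) (by simp), mul_comm, sq]
  simp_rw [sq]

/-- Theorem 4.4: For `x_0 < … < x_{2n+1}`, `t_k ∈ (x_{2k}, x_{2k+1})`,
`s_k ∈ (x_{2k+1}, x_{2k+2})` for `k < n`, `s_n > x_{2n+1}`, and
`A = |Δ|^{1/2} C` with `A_{ℓ,k} = (|ω_t(x_ℓ)|/√|ω_x′(x_ℓ)|)/(x_ℓ − t_k)`, there is a
positive diagonal column scaling `Γ` such that for all unit vectors `u, v`,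
`‖AΓv‖₂ ≤ B ‖AΓu‖₂` where
`B = (max_ℓ √|ω_s(x_ℓ)/ω_t(x_ℓ)|)(max_k √|ω_t(x_k)/ω_s(x_k)|)`. -/
theorem scaled_condition_number_bound
    (n : ℕ) (x : Fin (2 * n + 2) → ℝ) (hx : StrictMono x)
    (t s : Fin (n + 1) → ℝ)
    (ht1 : ∀ k : Fin (n + 1), x ⟨2 * k.val, by have := k.isLt; omega⟩ < t k)
    (ht2 : ∀ k : Fin (n + 1), t k < x ⟨2 * k.val + 1, by have := k.isLt; omega⟩)
    (hs1 : ∀ k : Fin (n + 1), (h : k.val < n) →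
      x ⟨2 * k.val + 1, by have := k.isLt; omega⟩ < s k)
    (hs2 : ∀ k : Fin (n + 1), (h : k.val < n) →
      s k < x ⟨2 * k.val + 2, by omega⟩)
    (hsn : x ⟨2 * n + 1, by omega⟩ < s ⟨n, by omega⟩)
    (A : Matrix (Fin (2 * n + 2)) (Fin (n + 1)) ℝ)
    (hA : ∀ ℓ k, A ℓ k =
      |∏ i : Fin (n + 1), (x ℓ - t i)| /
        Real.sqrt |∏ m ∈ Finset.univ.erase ℓ, (x ℓ - x m)| / (x ℓ - t k)) :
    ∃ γ : Fin (n + 1) → ℝ, (∀ k, 0 < γ k) ∧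
      ∀ u v : Fin (n + 1) → ℝ,
        Real.sqrt (∑ i, u i ^ 2) = 1 → Real.sqrt (∑ i, v i ^ 2) = 1 →
        Real.sqrt (∑ ℓ, ((A * Matrix.diagonal γ).mulVec v ℓ) ^ 2) ≤
          ((Finset.univ.sup' Finset.univ_nonempty fun ℓ : Fin (2 * n + 2) =>
              Real.sqrt |(∏ i : Fin (n + 1), (x ℓ - s i)) /
                (∏ i : Fin (n + 1), (x ℓ - t i))|) *
           (Finset.univ.sup' Finset.univ_nonempty fun ℓ : Fin (2 * n + 2) =>
              Real.sqrt |(∏ i : Fin (n + 1), (x ℓ - t i)) /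
                (∏ i : Fin (n + 1), (x ℓ - s i))|)) *
          Real.sqrt (∑ ℓ, ((A * Matrix.diagonal γ).mulVec u ℓ) ^ 2) := by
  set ωt : Fin (2 * n + 2) → ℝ := fun l => ∏ i, (x l - t i) with hωt
  set ωs : Fin (2 * n + 2) → ℝ := fun l => ∏ i, (x l - s i) with hωs
  set ωx : Fin (2 * n + 2) → ℝ := fun l => ∏ m ∈ univ.erase l, (x l - x m) with hωx
  have hd : ∀ l, 0 < -(ωt l * ωs l / ωx l) := by
    refine neg_weight_pos n x hx t s (fun k i hi => ?_) (fun k i hi => ?_) (fun k i hi => ?_)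
      (fun k i hi => ?_)
    · rw [show i = ⟨2 * k.val, by omega⟩ from Fin.ext hi]
      exact ht1 k
    · rw [show i = ⟨2 * k.val + 1, by omega⟩ from Fin.ext hi]
      exact ht2 k
    · rw [show i = ⟨2 * k.val + 1, by omega⟩ from Fin.ext hi]
      by_cases h : k.val < n
      · exact hs1 k h
      · obtain rfl : k = ⟨n, n.lt_succ_self⟩ := Fin.ext (by simp only; omega)
        exact hsn
    · rw [show i = ⟨2 * k.val + 2, by omega⟩ from Fin.ext hi]
      exact hs2 k (by omega)
  set d : Fin (2 * n + 2) → ℝ := fun l => -(ωt l * ωs l / ωx l) with hdd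
  have hne : ∀ l, ωt l ≠ 0 ∧ ωs l ≠ 0 ∧ ωx l ≠ 0 := by
    intro l
    have h := (hd l).ne'
    refine ⟨fun h0 => h ?_, fun h0 => h ?_, fun h0 => h ?_⟩ <;> simp [h0]
  have hxt : ∀ l k, x l - t k ≠ 0 := fun l k => prod_ne_zero_iff.1 (hne l).1 k (mem_univ k)
  have hdabs : ∀ l, d l = |ωt l| * |ωs l| / |ωx l| := by
    intro l
    rw [← abs_mul, ← abs_div, ← abs_neg]
    exact (abs_of_pos (hd l)).symm
  have horth : ∀ j k : Fin (n + 1), j ≠ k →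
      ∑ l, d l * (1 / (x l - t j) * (1 / (x l - t k))) = 0 := by
    intro j k hjk
    have h := cauchy_orthogonal n x hx.injective t s hxt hjk
    simp only [hdd, neg_mul, sum_neg_distrib, neg_eq_zero]
    exact h
  have hpyth := sum_weight_mul_sq d (fun l k => 1 / (x l - t k)) horth
  set q : Fin (n + 1) → ℝ := fun k => ∑ l, d l * (1 / (x l - t k)) ^ 2 with hq
  have hqpos : ∀ k, 0 < q k := fun k => sum_pos (fun l _ =>
    mul_pos (hd l) (sq_pos_iff.2 (one_div_ne_zero (hxt l k)))) univ_nonempty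
  refine ⟨fun k => 1 / √(q k), fun k => one_div_pos.2 (Real.sqrt_pos.2 (hqpos k)), ?_⟩
  intro u v hu hv
  set γ : Fin (n + 1) → ℝ := fun k => 1 / √(q k) with hγ
  set g : (Fin (n + 1) → ℝ) → Fin (2 * n + 2) → ℝ :=
    fun w l => ∑ k, 1 / (x l - t k) * (γ k * w k) with hg
  have hiso : ∀ w, ∑ l, d l * g w l ^ 2 = ∑ k, w k ^ 2 := by
    intro w
    refine (hpyth fun k => γ k * w k).trans (sum_congr rfl fun k _ => ?_)
    have h1 : q k * γ k ^ 2 = 1 := by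
      rw [hγ]
      simp only
      rw [div_pow, Real.sq_sqrt (hqpos k).le, one_pow, mul_one_div_cancel (hqpos k).ne']
    calc q k * (γ k * w k) ^ 2 = q k * γ k ^ 2 * w k ^ 2 := by ring
      _ = w k ^ 2 := by rw [h1, one_mul]
  have hA2 : ∀ w l, ((A * Matrix.diagonal γ).mulVec w l) ^ 2
      = |ωt l / ωs l| * (d l * g w l ^ 2) := by
    intro w l
    have h1 : (A * Matrix.diagonal γ).mulVec w l = |ωt l| / √|ωx l| * g w l := by
      simp only [Matrix.mulVec, dotProduct, Matrix.mul_diagonal, hA, hg, mul_sum]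
      exact sum_congr rfl fun k _ => by ring
    have := abs_ne_zero.2 (hne l).2.1
    have := abs_ne_zero.2 (hne l).2.2
    rw [h1, mul_pow, div_pow, Real.sq_sqrt (abs_nonneg _), hdabs, abs_div]
    field_simp
  set M₁ := univ.sup' univ_nonempty fun l => √|ωs l / ωt l| with hM₁
  set M₂ := univ.sup' univ_nonempty fun l => √|ωt l / ωs l| with hM₂
  have hM₁l : ∀ l, √|ωs l / ωt l| ≤ M₁ := fun l =>
    le_sup' (fun l => √|ωs l / ωt l|) (mem_univ l)
  have hM₂l : ∀ l, √|ωt l / ωs l| ≤ M₂ := fun l =>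
    le_sup' (fun l => √|ωt l / ωs l|) (mem_univ l)
  have hM₁0 : 0 ≤ M₁ := (Real.sqrt_nonneg _).trans (hM₁l 0)
  have hM₂0 : 0 ≤ M₂ := (Real.sqrt_nonneg _).trans (hM₂l 0)
  simp_rw [hA2]
  have hupper : √(∑ l, |ωt l / ωs l| * (d l * g v l ^ 2)) ≤ M₂ := by
    refine Real.sqrt_le_iff.2 ⟨hM₂0, ?_⟩
    calc ∑ l, |ωt l / ωs l| * (d l * g v l ^ 2) ≤ ∑ l, M₂ ^ 2 * (d l * g v l ^ 2) :=
          sum_le_sum fun l _ => mul_le_mul_of_nonneg_right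
            (Real.sqrt_le_iff.1 (hM₂l l)).2 (mul_nonneg (hd l).le (sq_nonneg _))
      _ = M₂ ^ 2 := by rw [← mul_sum, hiso, Real.sqrt_eq_one.1 hv, mul_one]
  have hlower : 1 ≤ M₁ * √(∑ l, |ωt l / ωs l| * (d l * g u l ^ 2)) := by
    rw [← hu, ← hiso, ← Real.sqrt_sq hM₁0, ← Real.sqrt_mul (sq_nonneg _), mul_sum]
    refine Real.sqrt_le_sqrt (sum_le_sum fun l _ => ?_)
    have h1 : |ωs l / ωt l| * |ωt l / ωs l| = 1 := by
      rw [← abs_mul, div_mul_div_cancel₀ (hne l).1, div_self (hne l).2.1, abs_one]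
    calc d l * g u l ^ 2 = |ωs l / ωt l| * (|ωt l / ωs l| * (d l * g u l ^ 2)) := by
          rw [← mul_assoc, h1, one_mul]
      _ ≤ _ := mul_le_mul_of_nonneg_right (Real.sqrt_le_iff.1 (hM₁l l)).2
          (mul_nonneg (abs_nonneg _) (mul_nonneg (hd l).le (sq_nonneg _)))
  calc _ ≤ M₂ * 1 := by rw [mul_one]; exact hupper
    _ ≤ M₂ * (M₁ * √(∑ l, |ωt l / ωs l| * (d l * g u l ^ 2))) :=
        mul_le_mul_of_nonneg_left hlower hM₂0
    _ = _ := by ring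
end

section
/- Let n ≥ 0, let x_0 < x_1 < … < x_{2n+1} be real numbers, and set t_k = x_{2k+1} for k = 0, …, n. Define ω_t(z) = ∏_{k=0}^n (z − t_k), ω_t′(t_k) = ∏_{i≠k} (t_k − t_i), and ω_x′(x_j) = ∏_{i≠j} (x_j − x_i). Define the (2n+2) × (n+1) matrices C̃ and Q_1 and the (n+1) × (n+1) matrix R by: C̃_{j,k} = |ω_t′(t_k)| / √|ω_x′(t_k)| if j = 2k+1; C̃_{j,k} = 0 if j is odd and j ≠ 2k+1; C̃_{j,k} = ( |ω_t(x_j)| / √|ω_x′(x_j)| ) / (x_j − t_k) if j is even; Q_1 has entries (Q_1)_{j,k} = 1/√2 if j = 2k+1, (Q_1)_{j,k} = 0 if j is odd and j ≠ 2k+1, and (Q_1)_{j,k} = |ω_t(x_j)/ω_t′(t_k)| · √( |ω_x′(t_k)/(2 ω_x′(x_j))| ) / (x_j − t_k) if j is even; and R = √2 · diag( |ω_t′(t_0)|/√|ω_x′(t_0)|, …, |ω_t′(t_n)|/√|ω_x′(t_n)| ). Then Q_1^T Q_1 = I_{n+1} and C̃ = Q_1 R; that is, C̃ = Q_1 R is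 a thin QR decomposition with Q_1 having orthonormal columns and R diagonal with positive diagonal. (Corollary 4.5 of the paper.) -/
/-!
Write `s k = x_{2k}` for the even nodes and `t k = x_{2k+1}` for the odd ones, so that
`ω_x = ω_s ω_t`, whence `ω_x'(s_j) = ω_s'(s_j) ω_t(s_j)` and `ω_x'(t_k) = ω_s(t_k) ω_t'(t_k)`
(`prod_erase_even`, `prod_erase_odd`). Since the nodes interlace, pairing the factors belonging to
`s_i` and `t_i` gives `ω_x'(s_j) < 0 < ω_x'(t_k)`, which removes the absolute values.

The odd rows of `Q₁` contribute `δ_{kl} / 2` to `Q₁ᵀ Q₁`. The even rows contribute a multiple of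
`∑_j P_k(s_j) / (ω_s'(s_j) (t_l - s_j))` with `P_k(z) = ω_t(z) / (z - t_k)`. As `P_k` has degree
`n`, it equals its Lagrange interpolant at the `n + 1` nodes `s_j`, so this sum is
`P_k(t_l) / ω_s(t_l)` (`sum_lagrange`); it vanishes for `k ≠ l`, and for `k = l` it makes the
contribution `1/2`. The factorisation `C̃ = Q₁ R` is an entrywise identity.
-/

open Finset


lemma evenIdx_lt {n : ℕ} (k : Fin (n + 1)) : 2 * k.val < 2 * n + 2 := by
  have := k.isLt; omega

lemma oddIdx_lt {n : ℕ} (k : Fin (n + 1)) : 2 * k.val + 1 < 2 * n + 2 := by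
  have := k.isLt; omega

/-- The even position `2k` among `2n + 2` nodes. -/
def evenIdx {n : ℕ} (k : Fin (n + 1)) : Fin (2 * n + 2) :=
  ⟨2 * k.val, evenIdx_lt k⟩

/-- The odd position `2k + 1` among `2n + 2` nodes. -/
def oddIdx {n : ℕ} (k : Fin (n + 1)) : Fin (2 * n + 2) :=
  ⟨2 * k.val + 1, oddIdx_lt k⟩

lemma exists_even_or_odd {n : ℕ} (j : Fin (2 * n + 2)) :
    (∃ k : Fin (n + 1), j = evenIdx k) ∨ ∃ k : Fin (n + 1), j = oddIdx k := by
  have hj := j.isLt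
  rcases Nat.even_or_odd' j.val with ⟨m, h | h⟩
  · exact Or.inl ⟨⟨m, by omega⟩, Fin.ext h⟩
  · exact Or.inr ⟨⟨m, by omega⟩, Fin.ext h⟩

lemma bijective_even_odd (n : ℕ) :
    Function.Bijective (Sum.elim (evenIdx (n := n)) (oddIdx (n := n))) := by
  constructor
  · rintro (a | a) (b | b) h <;>
      simp only [Sum.elim_inl, Sum.elim_inr, evenIdx, oddIdx, Fin.mk.injEq] at h
    · exact congrArg _ (Fin.ext (by omega))
    · omega
    · omega
    · exact congrArg _ (Fin.ext (by omega))
  · intro j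
    rcases exists_even_or_odd j with ⟨k, rfl⟩ | ⟨k, rfl⟩
    · exact ⟨Sum.inl k, rfl⟩
    · exact ⟨Sum.inr k, rfl⟩

lemma prod_even_odd {n : ℕ} (f : Fin (2 * n + 2) → ℝ) :
    ∏ i, f i = (∏ k, f (evenIdx k)) * ∏ k, f (oddIdx k) := by
  rw [← (bijective_even_odd n).prod_comp f, Fintype.prod_sum_type]
  rfl

lemma sum_even_odd {n : ℕ} (f : Fin (2 * n + 2) → ℝ) :
    ∑ i, f i = (∑ k, f (evenIdx k)) + ∑ k, f (oddIdx k) := by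
  rw [← (bijective_even_odd n).sum_comp f, Fintype.sum_sum_type]
  rfl

lemma prod_erase_eq_ite {ι : Type*} [Fintype ι] [DecidableEq ι] (j : ι) (f : ι → ℝ) :
    ∏ i ∈ Finset.univ.erase j, f i = ∏ i, if i = j then 1 else f i := by
  rw [← Finset.mul_prod_erase _ (fun i => if i = j then 1 else f i) (Finset.mem_univ j)]
  simp only [if_true, one_mul]
  exact Finset.prod_congr rfl fun i hi => (if_neg (Finset.ne_of_mem_erase hi)).symm

lemma prod_erase_even {n : ℕ} (j : Fin (n + 1)) (f : Fin (2 * n + 2) → ℝ) :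
    ∏ i ∈ Finset.univ.erase (evenIdx j), f i =
      (∏ k ∈ Finset.univ.erase j, f (evenIdx k)) * ∏ k, f (oddIdx k) := by
  rw [prod_erase_eq_ite, prod_even_odd, prod_erase_eq_ite]
  congr 1
  · refine Finset.prod_congr rfl fun i _ => ?_
    simp [evenIdx, Fin.ext_iff]
  · refine Finset.prod_congr rfl fun i _ => if_neg ?_
    simp only [evenIdx, oddIdx, Fin.mk.injEq]; omega

lemma prod_erase_odd {n : ℕ} (j : Fin (n + 1)) (f : Fin (2 * n + 2) → ℝ) :
    ∏ i ∈ Finset.univ.erase (oddIdx j), f i =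
      (∏ k, f (evenIdx k)) * ∏ k ∈ Finset.univ.erase j, f (oddIdx k) := by
  rw [prod_erase_eq_ite, prod_even_odd, prod_erase_eq_ite]
  congr 1
  · refine Finset.prod_congr rfl fun i _ => if_neg ?_
    simp only [evenIdx, oddIdx, Fin.mk.injEq]; omega
  · refine Finset.prod_congr rfl fun i _ => ?_
    simp [oddIdx, Fin.ext_iff]

/-- Lagrange interpolation of `P_k(z) = ∏_{i ≠ k} (z - t_i)` at the nodes `s_j`, evaluated at the
point `t_l`. -/
lemma sum_lagrange {n : ℕ} (s t : Fin (n + 1) → ℝ) (hs : Function.Injective s)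
    (hst : ∀ j l, t l ≠ s j) (k l : Fin (n + 1)) :
    (∏ j, (t l - s j)) * ∑ j, (∏ i ∈ Finset.univ.erase k, (s j - t i)) /
      ((∏ i ∈ Finset.univ.erase j, (s j - s i)) * (t l - s j)) =
      if k = l then ∏ i ∈ Finset.univ.erase k, (t k - t i) else 0 := by
  have hdeg : (Lagrange.nodal (Finset.univ.erase k) t).degree <
      ((Finset.univ : Finset (Fin (n + 1))).card : WithBot ℕ) := by
    rw [Lagrange.degree_nodal, Nat.cast_lt]
    exact Finset.card_erase_lt_of_mem (Finset.mem_univ k)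
  have h := Lagrange.eq_interpolate (s := Finset.univ) (v := s) hs.injOn hdeg
  have h2 := congrArg (Polynomial.eval (t l)) h
  rw [Lagrange.eval_interpolate_not_at_node _ (fun j _ => hst j l)] at h2
  simp only [Lagrange.eval_nodal, Lagrange.nodalWeight, Finset.prod_inv_distrib] at h2
  have e : (∏ i ∈ Finset.univ.erase k, (t l - t i)) =
      if k = l then ∏ i ∈ Finset.univ.erase k, (t k - t i) else 0 := by
    split_ifs with hkl
    · rw [hkl]
    · exact Finset.prod_eq_zero (Finset.mem_erase.2 ⟨Ne.symm hkl, Finset.mem_univ l⟩) (sub_self _)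
  rw [← e, h2]
  congr 1
  refine Finset.sum_congr rfl fun j _ => ?_
  rw [div_eq_mul_inv, mul_inv]
  ring

/-- The product of two even-row entries of `Q₁`, in terms of `A = ω_t(s_j)`, `D = ω_s'(s_j)`,
`T = ω_t'(t_k)`, `X = ω_x'(t_k)`, `u = s_j - t_k`, and `T'`, `X'`, `v` likewise for `t_l`. -/
lemma entry_mul (A D T T' X X' u v : ℝ) (hA : A ≠ 0) (hY : D * A < 0) (hT : T ≠ 0) (hT' : T' ≠ 0)
    (hX : 0 < X) (hX' : 0 < X') (hu : u ≠ 0) (hv : v ≠ 0) :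
    (|A / T| * Real.sqrt |X / (2 * (D * A))| / u) * (|A / T'| * Real.sqrt |X' / (2 * (D * A))| / v)
      = (Real.sqrt X / |T|) * (Real.sqrt X' / |T'|) / 2 * ((A / u) / (D * -v)) := by
  have hD : D ≠ 0 := by rintro rfl; simp at hY
  have hTa := abs_pos.2 hT
  have hTa' := abs_pos.2 hT'
  have e : ∀ Z : ℝ, 0 < Z →
      Real.sqrt |Z / (2 * (D * A))| = Real.sqrt Z / Real.sqrt (2 * -(D * A)) := by
    intro Z hZ
    rw [abs_div, abs_of_pos hZ, abs_of_neg (by linarith : 2 * (D * A) < 0), Real.sqrt_div hZ.le]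
    congr 2; ring
  rw [e X hX, e X' hX', abs_div, abs_div]
  have hq : Real.sqrt (2 * -(D * A)) ^ 2 = 2 * -(D * A) := Real.sq_sqrt (by linarith)
  have h1 : (|A| / |T| * (√X / √(2 * -(D * A))) / u) * (|A| / |T'| * (√X' / √(2 * -(D * A))) / v)
      = |A| ^ 2 * √X * √X' / (|T| * |T'| * (√(2 * -(D * A)) ^ 2) * u * v) := by
    have := (Real.sqrt_pos.2 (by linarith : 0 < 2 * -(D * A))).ne'
    field_simp
  rw [h1, hq, sq_abs]
  field_simp

/-- Corollary 4.5: With `x_0 < … < x_{2n+1}` and `t_k = x_{2k+1}`, the matrix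
`C̃` (the limit of `|Δ|^{1/2}C`) has the explicit thin QR decomposition `C̃ = Q₁ R` with
`Q₁` having orthonormal columns and `R = √2 diag(|ω_t′(t_k)|/√|ω_x′(t_k)|)` diagonal with
positive diagonal entries. -/
theorem explicit_thin_qr
    (n : ℕ) (x : Fin (2 * n + 2) → ℝ) (hx : StrictMono x)
    (t : Fin (n + 1) → ℝ)
    (ht : ∀ k : Fin (n + 1), t k = x ⟨2 * k.val + 1, by have := k.isLt; omega⟩)
    (Ct Q₁ : Matrix (Fin (2 * n + 2)) (Fin (n + 1)) ℝ)
    (R : Matrix (Fin (n + 1)) (Fin (n + 1)) ℝ)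
    (hCt : ∀ j k, Ct j k =
      if j.val = 2 * k.val + 1 then
        |∏ i ∈ Finset.univ.erase k, (t k - t i)| /
          Real.sqrt |∏ i ∈ Finset.univ.erase
            (⟨2 * k.val + 1, by have := k.isLt; omega⟩ : Fin (2 * n + 2)), (t k - x i)|
      else if j.val % 2 = 1 then 0
      else
        |∏ i : Fin (n + 1), (x j - t i)| /
          Real.sqrt |∏ i ∈ Finset.univ.erase j, (x j - x i)| / (x j - t k))
    (hQ₁ : ∀ j k, Q₁ j k =
      if j.val = 2 * k.val + 1 then 1 / Real.sqrt 2
      else if j.val % 2 = 1 then 0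
      else
        |(∏ i : Fin (n + 1), (x j - t i)) / (∏ i ∈ Finset.univ.erase k, (t k - t i))| *
          Real.sqrt |(∏ i ∈ Finset.univ.erase
              (⟨2 * k.val + 1, by have := k.isLt; omega⟩ : Fin (2 * n + 2)), (t k - x i)) /
            (2 * ∏ i ∈ Finset.univ.erase j, (x j - x i))| / (x j - t k))
    (hR : R = Real.sqrt 2 • Matrix.diagonal (fun k : Fin (n + 1) =>
      |∏ i ∈ Finset.univ.erase k, (t k - t i)| /
        Real.sqrt |∏ i ∈ Finset.univ.erase
          (⟨2 * k.val + 1, by have := k.isLt; omega⟩ : Fin (2 * n + 2)), (t k - x i)|)) :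
    Q₁.transpose * Q₁ = 1 ∧ Ct = Q₁ * R ∧ ∀ k, 0 < R k k := by
  set s : Fin (n + 1) → ℝ := fun k => x (evenIdx k) with hs
  have ht' : ∀ k, x (oddIdx k) = t k := fun k => (ht k).symm
  have hs' : ∀ k, x (evenIdx k) = s k := fun k => rfl
  have hoe : ∀ k : Fin (n + 1),
      (⟨2 * k.val + 1, by have := k.isLt; omega⟩ : Fin (2 * n + 2)) = oddIdx k := fun k => rfl
  simp only [hoe] at hCt hQ₁ hR
  have hss : ∀ i j, i < j → s i < s j := fun i j h => hx (by
    simp only [evenIdx, Fin.lt_def] at h ⊢; omega)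
  have htt : ∀ i j, i < j → t i < t j := fun i j h => by
    rw [← ht', ← ht']; exact hx (by simp only [oddIdx, Fin.lt_def] at h ⊢; omega)
  have hst : ∀ i j, i ≤ j → s i < t j := fun i j h => by
    rw [← ht']; exact hx (by simp only [evenIdx, oddIdx, Fin.lt_def, Fin.le_def] at h ⊢; omega)
  have hts : ∀ i j, i < j → t i < s j := fun i j h => by
    rw [← ht']; exact hx (by simp only [evenIdx, oddIdx, Fin.lt_def] at h ⊢; omega)
  have hne : ∀ j l, t l ≠ s j := fun j l => by
    rcases le_or_gt j l with h | h
    · exact (hst j l h).ne'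
    · exact (hts l j h).ne
  have hsinj : Function.Injective s :=
    (show StrictMono s from fun i j h => hss i j h).injective
  obtain ⟨A, hA⟩ : ∃ A : Fin (n + 1) → ℝ, ∀ j, ∏ i, (s j - t i) = A j := ⟨_, fun _ => rfl⟩
  obtain ⟨S, hS⟩ : ∃ S : Fin (n + 1) → ℝ, ∀ k, ∏ i, (t k - s i) = S k := ⟨_, fun _ => rfl⟩
  obtain ⟨D, hD⟩ : ∃ D : Fin (n + 1) → ℝ,
      ∀ j, ∏ i ∈ Finset.univ.erase j, (s j - s i) = D j := ⟨_, fun _ => rfl⟩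
  obtain ⟨T, hT⟩ : ∃ T : Fin (n + 1) → ℝ,
      ∀ k, ∏ i ∈ Finset.univ.erase k, (t k - t i) = T k := ⟨_, fun _ => rfl⟩
  have hX : ∀ k, ∏ i ∈ Finset.univ.erase (oddIdx k), (t k - x i) = S k * T k := fun k => by
    rw [prod_erase_odd]; simp only [ht', hs', hS, hT]
  have hY : ∀ j, ∏ i ∈ Finset.univ.erase (evenIdx j), (s j - x i) = D j * A j := fun j => by
    rw [prod_erase_even]; simp only [ht', hs', hD, hA]
  -- Interlacing: the factors of `s_i` and `t_i` have the same sign for `i ≠ k`.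
  have hXpos : ∀ k, 0 < S k * T k := fun k => by
    rw [← hS, ← hT, ← Finset.mul_prod_erase _ _ (Finset.mem_univ k), mul_assoc,
      ← Finset.prod_mul_distrib]
    refine mul_pos (sub_pos.2 (hst k k le_rfl)) (Finset.prod_pos fun i hi => ?_)
    rcases lt_or_gt_of_ne (Finset.ne_of_mem_erase hi) with h | h
    · exact mul_pos (sub_pos.2 (hst i k h.le)) (sub_pos.2 (htt i k h))
    · exact mul_pos_of_neg_of_neg (sub_neg.2 (hts k i h)) (sub_neg.2 (htt k i h))
  have hYneg : ∀ j, D j * A j < 0 := fun j => by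
    rw [← hA, ← hD, ← Finset.mul_prod_erase _ (fun i => s j - t i) (Finset.mem_univ j),
      mul_left_comm, ← Finset.prod_mul_distrib]
    refine mul_neg_of_neg_of_pos (sub_neg.2 (hst j j le_rfl)) (Finset.prod_pos fun i hi => ?_)
    rcases lt_or_gt_of_ne (Finset.ne_of_mem_erase hi) with h | h
    · exact mul_pos (sub_pos.2 (hss i j h)) (sub_pos.2 (hts i j h))
    · exact mul_pos_of_neg_of_neg (sub_neg.2 (hss j i h)) (sub_neg.2 (hst j i h.le))
  have hT0 : ∀ k, T k ≠ 0 := fun k h => by have := hXpos k; simp [h] at this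
  have hS0 : ∀ k, S k ≠ 0 := fun k h => by have := hXpos k; simp [h] at this
  have hA0 : ∀ k, A k ≠ 0 := fun k h => by have := hYneg k; simp [h] at this
  have hu0 : ∀ j k, s j - t k ≠ 0 := fun j k => sub_ne_zero.2 (hne j k).symm
  have hQo : ∀ j k, Q₁ (oddIdx j) k = if j = k then 1 / Real.sqrt 2 else 0 := fun j k => by
    rw [hQ₁]
    by_cases h : j = k
    · rw [if_pos (by simp [oddIdx, h]), if_pos h]
    · rw [if_neg (by simp only [oddIdx]; omega), if_pos (by simp only [oddIdx]; omega), if_neg h]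
  have hCo : ∀ j k, Ct (oddIdx j) k = if j = k then |T k| / Real.sqrt |S k * T k| else 0 :=
    fun j k => by
    rw [hCt, hX, hT]
    by_cases h : j = k
    · rw [if_pos (by simp [oddIdx, h]), if_pos h]
    · rw [if_neg (by simp only [oddIdx]; omega), if_pos (by simp only [oddIdx]; omega), if_neg h]
  have hQe : ∀ j k, Q₁ (evenIdx j) k =
      |A j / T k| * Real.sqrt |(S k * T k) / (2 * (D j * A j))| / (s j - t k) := fun j k => by
    rw [hQ₁, if_neg (by simp only [evenIdx]; omega), if_neg (by simp only [evenIdx]; omega)]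
    simp only [hs', hX, hY, hA, hT]
  have hCe : ∀ j k, Ct (evenIdx j) k =
      |A j| / Real.sqrt |D j * A j| / (s j - t k) := fun j k => by
    rw [hCt, if_neg (by simp only [evenIdx]; omega), if_neg (by simp only [evenIdx]; omega)]
    simp only [hs', hY, hA]
  simp only [hX, hT] at hR
  have h2 : 0 < Real.sqrt 2 := by positivity
  have hd : ∀ k, 0 < |T k| / Real.sqrt |S k * T k| := fun k =>
    div_pos (abs_pos.2 (hT0 k)) (Real.sqrt_pos.2 (abs_pos.2 (hXpos k).ne'))
  refine ⟨?_, ?_, ?_⟩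
  · ext k l
    rw [Matrix.mul_apply, Matrix.one_apply, sum_even_odd]
    simp only [Matrix.transpose_apply]
    have hodd : ∑ j, Q₁ (oddIdx j) k * Q₁ (oddIdx j) l = if k = l then 1 / 2 else 0 := by
      simp only [hQo]
      by_cases h : k = l
      · subst h
        simp [← mul_inv]
      · rw [if_neg h]
        refine Finset.sum_eq_zero fun j _ => ?_
        by_cases hj : j = k
        · rw [if_neg (fun hl => h (hj.symm.trans hl)), mul_zero]
        · rw [if_neg hj, zero_mul]
    have hP : ∀ j, A j / (s j - t k) = ∏ i ∈ Finset.univ.erase k, (s j - t i) := fun j => by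
      rw [← hA, ← Finset.mul_prod_erase _ _ (Finset.mem_univ k), mul_div_cancel_left₀ _ (hu0 j k)]
    have heven : ∑ j, Q₁ (evenIdx j) k * Q₁ (evenIdx j) l = if k = l then 1 / 2 else 0 := by
      have hL := sum_lagrange s t hsinj hne k l
      rw [hS, hT] at hL
      have : ∀ j, Q₁ (evenIdx j) k * Q₁ (evenIdx j) l =
          (√(S k * T k) / |T k|) * (√(S l * T l) / |T l|) / 2 *
            ((∏ i ∈ Finset.univ.erase k, (s j - t i)) /
      ((∏ i ∈ Finset.univ.erase j, (s j - s i)) * (t l - s j))) := fun j => by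
        rw [hQe, hQe, entry_mul _ _ _ _ _ _ _ _ (hA0 j) (hYneg j) (hT0 k) (hT0 l) (hXpos k)
          (hXpos l) (hu0 j k) (hu0 j l), hP, hD, neg_sub]
      rw [Finset.sum_congr rfl fun j _ => this j, ← Finset.mul_sum]
      rw [mul_comm, ← eq_div_iff (hS0 l)] at hL
      rw [hL]
      by_cases h : k = l
      · subst h
        simp only [if_true]
        have e : (√(S k * T k) / |T k|) * (√(S k * T k) / |T k|) = (S k * T k) / T k ^ 2 := by
          rw [div_mul_div_comm, Real.mul_self_sqrt (hXpos k).le, abs_mul_abs_self, sq]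
        rw [e]
        have := hT0 k
        have := hS0 k
        field_simp
      · simp [h]
    rw [hodd, heven]
    split_ifs <;> norm_num
  · ext j k
    rw [hR, Matrix.mul_smul, Matrix.smul_apply, Matrix.mul_diagonal, smul_eq_mul]
    rcases exists_even_or_odd j with ⟨j, rfl⟩ | ⟨j, rfl⟩
    · rw [hCe, hQe, abs_div, abs_div, abs_mul 2, abs_two, Real.sqrt_div (abs_nonneg _),
        Real.sqrt_mul (by norm_num : (0 : ℝ) ≤ 2)]
      have h1 := hu0 j k
      have h3 := (abs_pos.2 (hT0 k)).ne'
      have h4 := (Real.sqrt_pos.2 (abs_pos.2 (hXpos k).ne')).ne'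
      have h5 := (Real.sqrt_pos.2 (abs_pos.2 (hYneg j).ne)).ne'
      field_simp
    · rw [hCo, hQo]
      split_ifs
      · field_simp
      · simp
  · intro k
    rw [hR, Matrix.smul_apply, Matrix.diagonal_apply_eq, smul_eq_mul]
    exact mul_pos h2 (hd k)
end

section
/- Let n ≥ 0, let a ≤ x_0 < x_1 < … < x_{2n+1} ≤ b be real numbers, and let f : ℝ → ℝ. Suppose p, q, p′, q′ are real polynomials of degree at most n, such that q(x) ≠ 0 and q′(x) ≠ 0 for all x ∈ [a, b], and there exist real numbers λ, λ′ with f(x_ℓ) − p(x_ℓ)/q(x_ℓ) = (−1)^{ℓ+1} λ and f(x_ℓ) − p′(x_ℓ)/q′(x_ℓ) = (−1)^{ℓ+1} λ′ for all ℓ = 0, …, 2n+1. Then λ = λ′ and p(x) q′(x) = p′(x) q(x) for all real x, i.e. the two rational functions coincide. (This is the uniqueness of the pole-free solution of the levelled-error equations in Step 2 of the rational Remez algorithm: the difference of the two rational functions is of type (2n, 2n) and has at least 2n+1 zeros in [a, b].) -/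
/-!
Subtracting the two levelled-error equations and clearing denominators, the polynomial
`D = p q' - p' q`, of degree at most `2n`, satisfies
`D(x_ℓ) = (-1)^(ℓ+1) (lam' - lam) (q q')(x_ℓ)` at the `2n + 2` reference points.
If `lam = lam'`, all of these are zeros of `D`. Otherwise `q q'`, being zero-free on `[a, b]`, has
constant sign there, so the values `D(x_ℓ)` are nonzero and alternate in sign, and the intermediate
value theorem gives a zero of `D` strictly between any two consecutive reference points,
`2n + 1` in all. In both cases `D` has more zeros than its degree allows, hence `D = 0`; in the
second case this contradicts `D(x_0) ≠ 0`.
-/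

open Finset

open Polynomial in
/-- Intermediate value theorem for a polynomial whose values at the ends of an interval do not
have the same strict sign. -/
lemma exists_root_of_eval_mul_nonpos (P : ℝ[X]) {u v : ℝ} (huv : u ≤ v)
    (h : P.eval u * P.eval v ≤ 0) : ∃ z ∈ Set.Icc u v, P.eval z = 0 := by
  have hc : ContinuousOn (fun z => P.eval z) (Set.Icc u v) := P.continuous.continuousOn
  rcases mul_nonpos_iff.mp h with ⟨h1, h2⟩ | ⟨h1, h2⟩
  · exact intermediate_value_Icc' huv hc ⟨h2, h1⟩
  · exact intermediate_value_Icc huv hc ⟨h1, h2⟩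

open Polynomial in
/-- A polynomial with nonzero values of alternating sign at `m + 2` increasing points has degree
greater than `m`. -/
lemma lt_natDegree_of_alternating {m : ℕ} (P : ℝ[X]) {x : Fin (m + 2) → ℝ} (hx : StrictMono x)
    (halt : ∀ i : Fin (m + 1), P.eval (x i.castSucc) * P.eval (x i.succ) < 0) :
    m < P.natDegree := by
  have hroot : ∀ i : Fin (m + 1), ∃ z ∈ Set.Ioo (x i.castSucc) (x i.succ), P.eval z = 0 := by
    intro i
    obtain ⟨z, hz, hz0⟩ := exists_root_of_eval_mul_nonpos P
      (hx i.castSucc_lt_succ).le (halt i).le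
    have hne := (halt i).ne
    refine ⟨z, ⟨lt_of_le_of_ne hz.1 ?_, lt_of_le_of_ne hz.2 ?_⟩, hz0⟩
    · rintro rfl
      simp [hz0] at hne
    · rintro rfl
      simp [hz0] at hne
  choose z hz hz0 using hroot
  have hmono : StrictMono z := by
    intro i j hij
    have hle : x i.succ ≤ x j.castSucc := hx.monotone (Fin.succ_le_castSucc_iff.mpr hij)
    exact (hz i).2.trans_le (hle.trans (hz j).1.le)
  by_contra hdeg
  have hP : P = 0 := eq_zero_of_natDegree_lt_card_of_eval_eq_zero P hmono.injective hz0
    (by rw [Fintype.card_fin]; omega)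
  have h0 := halt 0
  simp [hP] at h0

/-- Uniqueness of the pole-free solution of the levelled-error equations:
if two rational functions `p/q`, `p′/q′` of type `(n,n)` pole-free on `[a,b]` satisfy
`f(x_ℓ) − r(x_ℓ) = (−1)^{ℓ+1}λ` on the same reference `a ≤ x_0 < … < x_{2n+1} ≤ b`,
then the levelled errors coincide and the two rational functions coincide. -/
theorem levelled_error_unique
    (n : ℕ) (a b : ℝ) (x : Fin (2 * n + 2) → ℝ) (hx : StrictMono x)
    (ha : a ≤ x 0) (hb : x (Fin.last (2 * n + 1)) ≤ b) (f : ℝ → ℝ)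
    (p q p' q' : Polynomial ℝ)
    (hp : p.degree ≤ (n : ℕ)) (hq : q.degree ≤ (n : ℕ))
    (hp' : p'.degree ≤ (n : ℕ)) (hq' : q'.degree ≤ (n : ℕ))
    (hqz : ∀ z ∈ Set.Icc a b, q.eval z ≠ 0)
    (hq'z : ∀ z ∈ Set.Icc a b, q'.eval z ≠ 0)
    (lam lam' : ℝ)
    (h1 : ∀ ℓ : Fin (2 * n + 2),
      f (x ℓ) - p.eval (x ℓ) / q.eval (x ℓ) = (-1) ^ (ℓ.val + 1) * lam)
    (h2 : ∀ ℓ : Fin (2 * n + 2),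
      f (x ℓ) - p'.eval (x ℓ) / q'.eval (x ℓ) = (-1) ^ (ℓ.val + 1) * lam') :
    lam = lam' ∧ ∀ z : ℝ, p.eval z * q'.eval z = p'.eval z * q.eval z := by
  set D : Polynomial ℝ := p * q' - p' * q with hD
  have hmem : ∀ ℓ, x ℓ ∈ Set.Icc a b := fun ℓ =>
    ⟨ha.trans (hx.monotone (Fin.zero_le ℓ)), (hx.monotone (Fin.le_last ℓ)).trans hb⟩
  have hdeg : D.natDegree ≤ 2 * n := by
    have hp := Polynomial.natDegree_le_of_degree_le hp
    have hq := Polynomial.natDegree_le_of_degree_le hq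
    have hp' := Polynomial.natDegree_le_of_degree_le hp'
    have hq' := Polynomial.natDegree_le_of_degree_le hq'
    rw [two_mul, ← max_self (n + n)]
    exact Polynomial.natDegree_sub_le_of_le (Polynomial.natDegree_mul_le_of_le hp hq')
      (Polynomial.natDegree_mul_le_of_le hp' hq)
  have hval : ∀ ℓ, D.eval (x ℓ) =
      (-1) ^ (ℓ.val + 1) * (lam' - lam) * (q * q').eval (x ℓ) := by
    intro ℓ
    have hqℓ := hqz _ (hmem ℓ)
    have hq'ℓ := hq'z _ (hmem ℓ)
    have hsub : p.eval (x ℓ) / q.eval (x ℓ) - p'.eval (x ℓ) / q'.eval (x ℓ) =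
        (-1) ^ (ℓ.val + 1) * (lam' - lam) := by
      linear_combination h2 ℓ - h1 ℓ
    rw [← hsub, hD]
    simp only [Polynomial.eval_sub, Polynomial.eval_mul]
    field_simp
  have hlam : lam = lam' := by
    by_contra hne
    have hd : 0 < (lam' - lam) ^ 2 := by
      have := sub_ne_zero.mpr (Ne.symm hne)
      positivity
    refine absurd (lt_natDegree_of_alternating D hx fun i => ?_) (not_lt.mpr hdeg)
    have hQ : 0 < (q * q').eval (x i.castSucc) * (q * q').eval (x i.succ) := by
      by_contra hQ
      obtain ⟨z, hz, hz0⟩ := exists_root_of_eval_mul_nonpos (q * q')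
        (hx i.castSucc_lt_succ).le (not_lt.mp hQ)
      have hzab : z ∈ Set.Icc a b := ⟨(hmem _).1.trans hz.1, hz.2.trans (hmem _).2⟩
      rw [Polynomial.eval_mul] at hz0
      exact mul_ne_zero (hqz z hzab) (hq'z z hzab) hz0
    have hs : ((-1 : ℝ) ^ i.val) ^ 2 = 1 := by rw [← pow_mul, mul_comm, pow_mul]; simp
    have hprod : D.eval (x i.castSucc) * D.eval (x i.succ) = -((lam' - lam) ^ 2 *
        ((q * q').eval (x i.castSucc) * (q * q').eval (x i.succ))) := by
      rw [hval, hval, Fin.val_castSucc, Fin.val_succ, pow_succ, pow_succ]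
      linear_combination (-((lam' - lam) ^ 2 *
        ((q * q').eval (x i.castSucc) * (q * q').eval (x i.succ)))) * hs
    rw [hprod]
    exact neg_neg_of_pos (mul_pos hd hQ)
  refine ⟨hlam, fun z => ?_⟩
  have hD0 : D = 0 := Polynomial.eq_zero_of_natDegree_lt_card_of_eval_eq_zero D hx.injective
    (fun ℓ => by rw [hval, hlam]; ring) (by rw [Fintype.card_fin]; omega)
  have hz := congrArg (Polynomial.eval z) hD0
  rw [hD, Polynomial.eval_sub, Polynomial.eval_mul, Polynomial.eval_mul,
    Polynomial.eval_zero] at hz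
  exact sub_eq_zero.mp hz
end

section
/- Let n ≥ 1, let t_0, …, t_n be distinct real numbers, let α_0, …, α_n be real numbers, and let m be a natural number with m ≤ n − 1. Define the polynomial p(z) = ∑_{k=0}^{n} α_k ∏_{i≠k} (z − t_i), which has degree at most n. Then p has degree at most m if and only if ∑_{k=0}^{n} α_k t_k^j = 0 for all j = 0, 1, …, n − 1 − m; that is, if and only if the coefficient vector α = (α_0, …, α_n) lies in the null space of the transposed Vandermonde matrix V_m with entries (V_m)_{j,k} = t_k^j for 0 ≤ j ≤ n − 1 − m, 0 ≤ k ≤ n. (This is the characterization used in Section 2.1 to enforce rational approximants of nondiagonal type (m, n) with m < n in the barycentric representation.) -/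
open Finset Polynomial

/-!
With `ω = ∏ i, (X - t i)`, the `k`-th product is the quotient of `ω` by `X - t k`, so its
coefficients are given by Horner's scheme. Summing over `k` expresses the coefficient of `X ^ r`
in the numerator through the moments `s_j = ∑ k, α k * t k ^ j`, as
`s_{n-r} + (a combination of s_0, …, s_{n-r-1})`, the leading coefficient `1` being that
of the monic `ω`. This triangular unipotent system shows that the coefficients of
`X ^ n, …, X ^ (m + 1)` all vanish iff `s_0, …, s_{n-1-m}` do.
-/

/-- The coefficients of the barycentric numerator, in terms of the node polynomial and the
moments of `α`. -/
lemma numerator_coeff (n : ℕ) (t α : Fin (n + 1) → ℝ) (r : ℕ) :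
    (∑ k : Fin (n + 1), Polynomial.C (α k) *
        ∏ i ∈ Finset.univ.erase k, (Polynomial.X - Polynomial.C (t i))).coeff r =
      ∑ i ∈ Finset.Icc (r + 1) (n + 1), (∏ i, (X - C (t i))).coeff i *
        ∑ k, α k * t k ^ (i - (r + 1)) := by
  have hdeg : (∏ i, (X - C (t i))).natDegree = n + 1 := by simp
  have hq (k : Fin (n + 1)) :
      ∏ i ∈ Finset.univ.erase k, (X - C (t i)) = (∏ i, (X - C (t i))) /ₘ (X - C (t k)) := by
    rw [← Finset.mul_prod_erase _ _ (Finset.mem_univ k),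
      mul_divByMonic_cancel_left _ (monic_X_sub_C _)]
  simp only [finsetSum_coeff, coeff_C_mul, hq, coeff_divByMonic_X_sub_C, hdeg, Finset.mul_sum]
  rw [Finset.sum_comm]
  refine Finset.sum_congr rfl fun i _ => Finset.sum_congr rfl fun k _ => ?_
  ring

/-- For distinct `t_0,…,t_n` (`n ≥ 1`) and `m ≤ n − 1`, the polynomial
`p(z) = ∑_k α_k ∏_{i≠k}(z − t_i)` has degree at most `m` iff
`∑_k α_k t_k^j = 0` for all `j = 0,…,n−1−m`, i.e. iff `α` lies in the null space of the
transposed Vandermonde matrix `V_m` (characterization of nondiagonal type in Section 2.1). -/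
theorem barycentric_numerator_degree_le_iff
    (n : ℕ) (hn : 1 ≤ n) (t : Fin (n + 1) → ℝ) (ht : Function.Injective t)
    (α : Fin (n + 1) → ℝ) (m : ℕ) (hm : m ≤ n - 1) :
    (∑ k : Fin (n + 1), Polynomial.C (α k) *
        ∏ i ∈ Finset.univ.erase k, (Polynomial.X - Polynomial.C (t i))).degree ≤ (m : ℕ) ↔
      ∀ j : ℕ, j ≤ n - 1 - m → ∑ k : Fin (n + 1), α k * t k ^ j = 0 := by
  rw [degree_le_iff_coeff_zero]
  constructor
  · intro h j
    induction j using Nat.strong_induction_on with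
    | _ j ih =>
      intro hj
      -- The coefficient of `X ^ (n - j)` is `s_j` plus a combination of earlier moments.
      have hc := h (n - j) (by exact_mod_cast (by omega : m < n - j))
      have hlead : (∏ i, (X - C (t i))).coeff (n + 1) = 1 := by
        have hmonic : (∏ i, (X - C (t i))).Monic := monic_prod_X_sub_C t Finset.univ
        have hdeg : (∏ i, (X - C (t i))).natDegree = n + 1 := by simp
        simpa only [Monic, leadingCoeff, hdeg] using hmonic
      rw [numerator_coeff, Finset.sum_eq_single (n + 1), hlead, one_mul,
        (by omega : n + 1 - (n - j + 1) = j)] at hc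
      · exact hc
      · intro i hi hne
        rw [Finset.mem_Icc] at hi
        rw [ih _ (by omega) (by omega), mul_zero]
      · intro hi
        exact absurd (Finset.mem_Icc.2 ⟨by omega, le_rfl⟩) hi
  · intro h r hr
    have hr' : m < r := by exact_mod_cast hr
    rw [numerator_coeff]
    refine Finset.sum_eq_zero fun i hi => ?_
    rw [Finset.mem_Icc] at hi
    rw [h _ (by omega), mul_zero]
end

section
/- Let n ≥ 0, let t_0, …, t_n be distinct real numbers, and let α_0, …, α_n and β_0, …, β_n be real numbers. Fix an index k with β_k ≠ 0, and consider the barycentric rational function r(z) = ( ∑_{j=0}^n α_j/(z − t_j) ) / ( ∑_{j=0}^n β_j/(z − t_j) ), defined for z ∉ {t_0, …, t_n} where the denominator is nonzero. Then r(z) tends to α_k/β_k as z tends to t_k through values z ∉ {t_0, …, t_n}; that is, t_k is a removable singularity of r with limiting value α_k/β_k. -/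
open Finset Filter

/-!
Multiplying numerator and denominator of `r` by `z - t k` does not change the quotient away from
the nodes, and it cancels the simple pole at `t k`: every term with `j ≠ k` is continuous at `t k`
because the nodes are distinct, so the factor `z - t k` kills it in the limit, while the term
`j = k` becomes its constant coefficient. The rescaled sums thus tend to `α k` and `β k ≠ 0`
(`tendsto_sub_mul_sum`).
-/

/-- The residue at `t k` of the partial fraction `∑ j, γ j / (z - t j)` is `γ k`. -/
lemma tendsto_sub_mul_sum (n : ℕ) (t : Fin (n + 1) → ℝ) (ht : Function.Injective t)
    (γ : Fin (n + 1) → ℝ) (k : Fin (n + 1)) :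
    Tendsto (fun z : ℝ => (z - t k) * ∑ j, γ j / (z - t j))
      (nhdsWithin (t k) {z : ℝ | ∀ j, z ≠ t j}) (nhds (γ k)) := by
  have hterm : ∀ j ∈ (Finset.univ : Finset (Fin (n + 1))),
      Tendsto (fun z : ℝ => (z - t k) * (γ j / (z - t j)))
        (nhdsWithin (t k) {z : ℝ | ∀ j, z ≠ t j}) (nhds (if j = k then γ k else 0)) := by
    intro j _
    by_cases hj : j = k
    · subst hj
      rw [if_pos rfl]
      refine tendsto_const_nhds.congr' ?_
      filter_upwards [self_mem_nhdsWithin] with z hz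
      exact (mul_div_cancel₀ (γ j) (sub_ne_zero.mpr (hz j))).symm
    · rw [if_neg hj]
      have hne : t k - t j ≠ 0 := sub_ne_zero.mpr fun h => hj (ht h).symm
      have hc : ContinuousAt (fun z : ℝ => (z - t k) * (γ j / (z - t j))) (t k) := by
        fun_prop (disch := exact hne)
      simpa [ContinuousAt] using hc.tendsto.mono_left nhdsWithin_le_nhds
  simpa [Finset.mul_sum] using tendsto_finsetSum Finset.univ hterm

/-- For distinct `t_0,…,t_n`, coefficients `α_j, β_j` with `β_k ≠ 0`, the
barycentric rational function `r(z) = (∑_j α_j/(z−t_j)) / (∑_j β_j/(z−t_j))` tends to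
`α_k/β_k` as `z → t_k` through values `z ∉ {t_0,…,t_n}`: `t_k` is a removable singularity. -/
theorem barycentric_removable_singularity
    (n : ℕ) (t : Fin (n + 1) → ℝ) (ht : Function.Injective t)
    (α β : Fin (n + 1) → ℝ) (k : Fin (n + 1)) (hβ : β k ≠ 0) :
    Filter.Tendsto
      (fun z : ℝ => (∑ j, α j / (z - t j)) / (∑ j, β j / (z - t j)))
      (nhdsWithin (t k) {z : ℝ | ∀ j, z ≠ t j})
      (nhds (α k / β k)) := by
  refine ((tendsto_sub_mul_sum n t ht α k).div (tendsto_sub_mul_sum n t ht β k) hβ).congr' ?_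
  filter_upwards [self_mem_nhdsWithin] with z hz
  exact mul_div_mul_left _ _ (sub_ne_zero.mpr (hz k))
end

section
/- Let M ≥ N ≥ 1. Let A be a real M × N matrix, and let F and S be real M × M diagonal matrices with S^2 = I (each diagonal entry of S is ±1). Suppose A^T S A = 0 and A = Q_1 R, where Q_1 is a real M × N matrix with orthonormal columns (Q_1^T Q_1 = I_N) and R is an invertible real N × N matrix. If α, β ∈ ℝ^N and λ ∈ ℝ satisfy the linearized levelled-error equations A α = (F − λ S) A β, then the vector y = R β satisfies the symmetric standard eigenvalue problem (Q_1^T S F Q_1) y = λ y; in particular Q_1^T S F Q_1 is a symmetric N × N matrix and λ is one of its eigenvalues. (This is the reduction in Section 4.2 of the generalized eigenvalue problem (4.11) for the barycentric rational Remez algorithm to the symmetric eigenproblem (4.16).) -/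
/-!
Since `R` is invertible, `Rᵀ(Q₁ᵀSQ₁)R = AᵀSA = 0` forces `Q₁ᵀSQ₁ = 0`. Multiplying the levelled-error
equations on the left by `Q₁ᵀS` therefore kills the `α` side, and `S² = I`, `Q₁ᵀQ₁ = I` turn the
`β` side into `(Q₁ᵀSFQ₁)Rβ - λRβ`. Symmetry holds because the diagonal matrices `S` and `F` commute.
-/

/-- Reduction of the generalized eigenvalue problem of the barycentric Remez
algorithm to a symmetric standard eigenvalue problem (Section 4.2): if `AᵀSA = 0`,
`A = Q₁R` with `Q₁ᵀQ₁ = I` and `R` invertible, `F, S` diagonal with `S² = I`, and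
`Aα = (F − λS)Aβ`, then `y = Rβ` satisfies `(Q₁ᵀSFQ₁) y = λ y`, and `Q₁ᵀSFQ₁` is symmetric. -/
theorem remez_symmetric_eigenproblem_reduction
    (M N : ℕ) (hN : 1 ≤ N) (hMN : N ≤ M)
    (A Q₁ : Matrix (Fin M) (Fin N) ℝ)
    (fdiag sdiag : Fin M → ℝ) (hs : ∀ i, sdiag i = 1 ∨ sdiag i = -1)
    (R : Matrix (Fin N) (Fin N) ℝ)
    (hAS : A.transpose * Matrix.diagonal sdiag * A = 0)
    (hQR : A = Q₁ * R) (hQ : Q₁.transpose * Q₁ = 1) (hR : IsUnit R)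
    (α β : Fin N → ℝ) (lam : ℝ)
    (heq : A.mulVec α =
      ((Matrix.diagonal fdiag - lam • Matrix.diagonal sdiag) * A).mulVec β) :
    (Q₁.transpose * Matrix.diagonal sdiag * Matrix.diagonal fdiag * Q₁).IsSymm ∧
      (Q₁.transpose * Matrix.diagonal sdiag * Matrix.diagonal fdiag * Q₁).mulVec
          (R.mulVec β) = lam • R.mulVec β := by
  have hX : Q₁.transpose * Matrix.diagonal sdiag * Q₁ = 0 := by
    have h : R.transpose * (Q₁.transpose * Matrix.diagonal sdiag * Q₁) * R = 0 := by
      rw [← hAS, hQR, Matrix.transpose_mul]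
      simp only [Matrix.mul_assoc]
    have hRT : IsUnit R.transpose := (Matrix.isUnit_transpose R).2 hR
    exact (hRT.mul_right_eq_zero).1 ((hR.mul_left_eq_zero).1 h)
  have hSS : Matrix.diagonal sdiag * Matrix.diagonal sdiag = 1 := by
    rw [Matrix.diagonal_mul_diagonal, ← Matrix.diagonal_one]
    congr 1
    ext i
    rcases hs i with h | h <;> simp [h]
  have hSF : Matrix.diagonal fdiag * Matrix.diagonal sdiag
      = Matrix.diagonal sdiag * Matrix.diagonal fdiag := by
    simp only [Matrix.diagonal_mul_diagonal, mul_comm]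
  refine ⟨?_, ?_⟩
  · simp only [Matrix.IsSymm, Matrix.transpose_mul, Matrix.diagonal_transpose,
      Matrix.transpose_transpose]
    rw [← Matrix.mul_assoc (Matrix.diagonal fdiag), hSF]
    simp only [Matrix.mul_assoc]
  · have hL : Q₁.transpose * Matrix.diagonal sdiag * A = 0 := by
      rw [hQR, ← Matrix.mul_assoc, hX, Matrix.zero_mul]
    have hRhs : Q₁.transpose * Matrix.diagonal sdiag *
        ((Matrix.diagonal fdiag - lam • Matrix.diagonal sdiag) * A) =
        Q₁.transpose * Matrix.diagonal sdiag * Matrix.diagonal fdiag * Q₁ * R - lam • R := by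
      have hSSQ : Q₁.transpose * Matrix.diagonal sdiag * Matrix.diagonal sdiag = Q₁.transpose := by
        rw [Matrix.mul_assoc, hSS, Matrix.mul_one]
      rw [← Matrix.mul_assoc, Matrix.mul_sub, Matrix.mul_smul, hSSQ, Matrix.sub_mul,
        Matrix.smul_mul, hQR, ← Matrix.mul_assoc, ← Matrix.mul_assoc, hQ, Matrix.one_mul]
    have h := congrArg (Q₁.transpose * Matrix.diagonal sdiag).mulVec heq
    rw [Matrix.mulVec_mulVec, Matrix.mulVec_mulVec, hL, hRhs, Matrix.zero_mulVec,
      Matrix.sub_mulVec, Matrix.smul_mulVec] at h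
    rw [Matrix.mulVec_mulVec]
    exact sub_eq_zero.1 h.symm
end
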